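/- Let G be a group with trivial center and A an abelian group, set Γ = G × A, and let ATv(Γ) be the kernel of the natural homomorphism Aut(Γ) → Aut(G) (induced by quotienting by the center Z(Γ) = {1} × A). Then: (1) the map Hom(G, A) → Aut(Γ) sending φ to the automorphism (g, a) ↦ (g, a·φ(g)) is an injective group homomorphism with image contained in ATv(Γ); (2) restriction of automorphisms to the center {1} × A ≅ A defines a homomorphism ATv(Γ) → Aut(A) which is surjective and split, a splitting being given by α ↦ id_G × α; (3) the kernel of this restriction homomorphism is exactly the image of Hom(G, A). Hence there is a split short exact sequence 1 → Hom(G, A) → ATv(Γ) → Aut(A) → 1. -/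

import Mathlib

/-!
Every automorphism of `G × A` preserves the characteristic subgroup `1 × A`, so it restricts to an
automorphism of `A`. Since `(g, a) = (1, a) * (g, 1)`, an automorphism lying over the identity of
`G` and restricting to the identity of `A` sends `(g, a)` to `(g, a * φ g)`, where `φ g` is the
second coordinate of the image of `(g, 1)`. When `G` has trivial center, `1 × A` is the center of
`G × A`.
-/

section Shear

variable {G A : Type*} [MulOneClass G] [CommGroup A]

/-- The embedding of `Hom(G, A)` into `Aut(G × A)` by shears along the second factor:
`φ` acts by `(g, a) ↦ (g, a * φ g)`. -/
def prodShear : (G →* A) →* MulAut (G × A) where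
  toFun φ :=
    { toFun x := (x.1, x.2 * φ x.1)
      invFun x := (x.1, x.2 * (φ x.1)⁻¹)
      left_inv x := by simp
      right_inv x := by simp
      map_mul' x y := by simp [mul_mul_mul_comm] }
  map_one' := by ext <;> simp
  map_mul' φ ψ := by ext <;> simp [mul_left_comm, mul_comm]

@[simp]
theorem prodShear_apply (φ : G →* A) (x : G × A) : prodShear φ x = (x.1, x.2 * φ x.1) :=
  rfl

theorem prodShear_injective : Function.Injective (prodShear : (G →* A) →* MulAut (G × A)) := by
  intro φ ψ h
  ext g
  simpa using congrArg (fun f : MulAut (G × A) => (f (g, 1)).2) h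

theorem exists_eq_prodShear_iff (f : MulAut (G × A)) :
    (∃ φ : G →* A, f = prodShear φ) ↔ (∀ g, (f (g, 1)).1 = g) ∧ ∀ a, f (1, a) = (1, a) := by
  constructor
  · rintro ⟨φ, rfl⟩
    simp
  · rintro ⟨over_id, fix_snd⟩
    let φ : G →* A := (MonoidHom.snd G A).comp (f.toMonoidHom.comp (MonoidHom.inl G A))
    refine ⟨φ, MulEquiv.ext fun ⟨g, a⟩ => ?_⟩
    calc
      f (g, a) = f (1, a) * f (g, 1) := by rw [← map_mul, Prod.mk_mul_mk, one_mul, mul_one]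
      _ = (1, a) * (g, φ g) := congrArg₂ _ (fix_snd a) (Prod.ext (over_id g) rfl)
      _ = prodShear φ (g, a) := by simp

end Shear

/-- The embedding `α ↦ id × α` of `Aut(A)` into `Aut(G × A)`. -/
def mulAutInr {G A : Type*} [MulOneClass G] [MulOneClass A] : MulAut A →* MulAut (G × A) where
  toFun α := (MulEquiv.refl G).prodCongr α
  map_one' := rfl
  map_mul' _ _ := rfl

theorem mulAutInr_apply {G A : Type*} [MulOneClass G] [MulOneClass A] (α : MulAut A)
    (x : G × A) : mulAutInr α x = (x.1, α x.2) :=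
  rfl

section Restriction

variable {G A : Type*} [Group G] [Group A]

/-- Restriction `Aut(G × A) → Aut(A)` of automorphisms to the second factor, embedded as the
subgroup `1 × A`, provided that this subgroup is characteristic. -/
def restrictSnd [(MonoidHom.inr G A).range.Characteristic] : MulAut (G × A) →* MulAut A :=
  (MulAut.congr (MonoidHom.ofLeftInverse (f := MonoidHom.inr G A) (g := MonoidHom.snd G A)
    fun _ => rfl).symm).toMonoidHom.comp (MulAut.characteristic (MonoidHom.inr G A).range)

variable [(MonoidHom.inr G A).range.Characteristic]

@[simp]
theorem restrictSnd_apply (f : MulAut (G × A)) (a : A) : restrictSnd f a = (f (1, a)).2 :=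
  rfl

theorem fst_apply_one_mk_eq_one (f : MulAut (G × A)) (a : A) : (f (1, a)).1 = 1 := by
  have mem_range : (1, a) ∈ (MonoidHom.inr G A).range := ⟨a, rfl⟩
  obtain ⟨b, hb⟩ : f (1, a) ∈ (MonoidHom.inr G A).range :=
    Subgroup.characteristic_iff_le_comap.mp inferInstance f mem_range
  rw [← hb, MonoidHom.inr_apply]

theorem restrictSnd_eq_one_iff (f : MulAut (G × A)) :
    restrictSnd f = 1 ↔ ∀ a, f (1, a) = (1, a) := by
  simp [MulEquiv.ext_iff, Prod.ext_iff, fst_apply_one_mk_eq_one]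

theorem restrictSnd_comp_mulAutInr :
    (restrictSnd (G := G)).comp mulAutInr = MonoidHom.id (MulAut A) :=
  rfl

end Restriction

theorem characteristic_range_inr_of_center_eq_bot {G A : Type*} [Group G] [CommGroup A]
    (hG : Subgroup.center G = ⊥) : (MonoidHom.inr G A).range.Characteristic := by
  have center_eq : Subgroup.center (G × A) = (MonoidHom.inr G A).range := by
    ext x
    simp [Subgroup.center_prod, hG, CommGroup.center_eq_top, Subgroup.mem_prod, Prod.ext_iff,
      eq_comm]
  exact center_eq ▸ Subgroup.centerCharacteristic

theorem mem_ker_iff_forall_fst_apply_mk_one {G A : Type*} [MulOneClass G] [MulOneClass A]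
    {F : MulAut (G × A) →* MulAut G} (hF : ∀ f g, F f g = (f (g, 1)).1) (f : MulAut (G × A)) :
    f ∈ F.ker ↔ ∀ g, (f (g, 1)).1 = g := by
  simp [MonoidHom.mem_ker, MulEquiv.ext_iff, hF]

theorem atv_of_prod_split_exact_general (G A : Type*) [Group G] [CommGroup A]
    (hA : (MonoidHom.inr G A).range.Characteristic)
    (F : MulAut (G × A) →* MulAut G)
    (hF : ∀ (f : MulAut (G × A)) (g : G), F f g = (f (g, 1)).1) :
    ∃ j : (G →* A) →* MulAut (G × A),
      (∀ (φ : G →* A) (g : G) (a : A), j φ (g, a) = (g, a * φ g)) ∧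
      Function.Injective j ∧
      (∀ φ : G →* A, j φ ∈ F.ker) ∧
      ∃ R : F.ker →* MulAut A,
        (∀ (f : F.ker) (a : A), R f a = ((f : MulAut (G × A)) (1, a)).2) ∧
        Function.Surjective R ∧
        (∃ s : MulAut A →* F.ker,
          R.comp s = MonoidHom.id (MulAut A) ∧
          ∀ (α : MulAut A) (g : G) (a : A), ((s α : MulAut (G × A)) (g, a)) = (g, α a)) ∧
        ∀ f : F.ker, f ∈ R.ker ↔ ∃ φ : G →* A, (f : MulAut (G × A)) = j φ := by
  have mem_ker := mem_ker_iff_forall_fst_apply_mk_one hF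
  let R : F.ker →* MulAut A := restrictSnd.comp F.ker.subtype
  let s : MulAut A →* F.ker := mulAutInr.codRestrict F.ker fun _ => (mem_ker _).mpr fun _ => rfl
  have R_comp_s : R.comp s = MonoidHom.id (MulAut A) := restrictSnd_comp_mulAutInr
  refine ⟨prodShear, fun _ _ _ => rfl, prodShear_injective, fun _ => (mem_ker _).mpr fun _ => rfl,
    R, fun _ _ => rfl, fun α => ⟨s α, DFunLike.congr_fun R_comp_s α⟩,
    ⟨s, R_comp_s, fun α g a => mulAutInr_apply α (g, a)⟩, fun ⟨f, hf⟩ => ?_⟩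
  calc
    ⟨f, hf⟩ ∈ R.ker ↔ ∀ a, f (1, a) = (1, a) := restrictSnd_eq_one_iff f
    _ ↔ (∀ g, (f (g, 1)).1 = g) ∧ ∀ a, f (1, a) = (1, a) :=
      (and_iff_right ((mem_ker f).mp hf)).symm
    _ ↔ ∃ φ : G →* A, f = prodShear φ := (exists_eq_prodShear_iff f).symm

/-- STATEMENT 18: let `G` have trivial center, `A` be abelian, `Γ = G × A`, and let
`ATv(Γ)` be the kernel of the natural map `F : Aut(Γ) → Aut(G)` (characterized by
`F f g = (f (g,1)).1`).  Then: (1) `φ ↦ ((g,a) ↦ (g, a·φ(g)))` is an injective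
homomorphism `Hom(G,A) → Aut(Γ)` with image inside `ATv(Γ)`; (2) restriction to the
center `{1} × A ≅ A` gives a surjective split homomorphism `ATv(Γ) → Aut(A)`, with
splitting `α ↦ id_G × α`; (3) its kernel is exactly the image of `Hom(G,A)`.  Hence
`1 → Hom(G,A) → ATv(Γ) → Aut(A) → 1` is split exact. -/
theorem atv_of_prod_split_exact (G A : Type*) [Group G] [CommGroup A]
    (hG : Subgroup.center G = ⊥)
    (F : MulAut (G × A) →* MulAut G)
    (hF : ∀ (f : MulAut (G × A)) (g : G), F f g = (f (g, 1)).1) :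
    ∃ j : (G →* A) →* MulAut (G × A),
      (∀ (φ : G →* A) (g : G) (a : A), j φ (g, a) = (g, a * φ g)) ∧
      Function.Injective j ∧
      (∀ φ : G →* A, j φ ∈ F.ker) ∧
      ∃ R : F.ker →* MulAut A,
        (∀ (f : F.ker) (a : A), R f a = ((f : MulAut (G × A)) (1, a)).2) ∧
        Function.Surjective R ∧
        (∃ s : MulAut A →* F.ker,
          R.comp s = MonoidHom.id (MulAut A) ∧
          ∀ (α : MulAut A) (g : G) (a : A), ((s α : MulAut (G × A)) (g, a)) = (g, α a)) ∧
        ∀ f : F.ker, f ∈ R.ker ↔ ∃ φ : G →* A, (f : MulAut (G × A)) = j φ := by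
  exact atv_of_prod_split_exact_general G A (characteristic_range_inr_of_center_eq_bot hG) F hF
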